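/- Assume 0 < q_i(v) < 1 for every i ∈ {1,…,L} and v ∈ 𝒱. Let B ≥ 1 with B < N, set K = min(B, |𝒱|), and let T be a set of exactly B prefixes contained in S_K such that q(u) ≥ q(w) for every u ∈ T and every prefix w ∈ S_K \ T (i.e. T consists of top-B-mass prefixes of S_K). Then T is a valid draft tree, and for every valid draft tree T' with |T'| ≤ B one has E_{Y∼Q}[α_{T'}(Y)] ≤ E_{Y∼Q}[α_T(Y)]; that is, T maximizes the surrogate expected acceptance length among all valid draft trees with at most B nodes. -/

import Mathlib

/-- Prefix mass starting at (1-based) depth `d`. -/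
noncomputable def mass {V : Type*} (q : ℕ → V → ℝ) : ℕ → List V → ℝ
  | _, [] => 1
  | d, a :: l => q d a * mass q (d + 1) l

/-- A valid draft tree: a finite set of prefixes (tuples of length between 1 and `L`)
that is prefix-closed. -/
def ValidTree {V : Type*} (L : ℕ) (T : Finset (List V)) : Prop :=
  (∀ u ∈ T, 1 ≤ u.length ∧ u.length ≤ L) ∧
  (∀ u ∈ T, 2 ≤ u.length → u.dropLast ∈ T)

/-- Acceptance length. -/
def accLen {V : Type*} [DecidableEq V] {L : ℕ} (T : Finset (List V)) (y : Fin L → V) : ℕ :=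
  ((Finset.Icc 1 L).filter (fun d => (List.ofFn y).take d ∈ T)).sup id

/-- Membership in `S_K`: `u` is a prefix (length in `{1,…,L}`) whose token at each
(1-based) depth `j` has rank at most `K` in the enumeration `vEnum`. -/
def inSK {V : Type*} (vEnum : ℕ → ℕ → V) (L K : ℕ) (u : List V) : Prop :=
  1 ≤ u.length ∧ u.length ≤ L ∧
  ∀ j : Fin u.length, ∃ k, 1 ≤ k ∧ k ≤ K ∧ vEnum ((j : ℕ) + 1) k = u.get j

/-!
The event that `u` is a prefix of `Y` has probability `mass q 1 u`, and a prefix-closed tree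
contains exactly `α_T(y)` prefixes of `y`, so the surrogate objective of a valid tree is the total
mass of its nodes. A tree made of the `B` heaviest prefixes therefore maximizes it; such a tree is
prefix-closed because removing the last token strictly increases the mass. Restricting the
candidates to `S_K` loses nothing: if some token of `w` has rank above `B`, then lowering all ranks
to at most `B` and letting that token range over the ranks `1, …, B` gives `B` prefixes in `S_K`
that are at least as heavy as `w`.
-/

section Mass

variable {V : Type*} {q : ℕ → V → ℝ} {d : ℕ}

theorem mass_concat (u : List V) (a : V) :
    mass q d (u ++ [a]) = mass q d u * q (u.length + d) a := by
  induction u generalizing d with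
  | nil => simp [mass]
  | cons b u ih =>
    rw [List.cons_append, mass, mass, ih, List.length_cons, mul_assoc, add_assoc, add_comm 1 d]

theorem mass_ofFn {n : ℕ} (f : Fin n → V) :
    mass q d (List.ofFn f) = ∏ i : Fin n, q (i + d) (f i) := by
  induction n generalizing d with
  | zero => simp [mass]
  | succ n ih =>
    simp only [List.ofFn_succ, mass, ih, Fin.prod_univ_succ, Fin.val_zero, zero_add, Fin.val_succ,
      add_assoc, add_comm 1 d]

theorem mass_pos {u : List V} (hq : ∀ (i : ℕ) (hi : i < u.length), 0 < q (i + d) u[i]) :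
    0 < mass q d u := by
  rw [← List.ofFn_get u, mass_ofFn]
  exact Finset.prod_pos fun i _ => hq i i.isLt

theorem mass_concat_lt {u : List V} {a : V} (hu : 0 < mass q d u) (ha : q (u.length + d) a < 1) :
    mass q d (u ++ [a]) < mass q d u := by
  rw [mass_concat]
  exact mul_lt_of_lt_one_right hu ha

end Mass

section PrefixProbability

variable {V : Type*} [Fintype V]

theorem sum_ofFn_succ {M : Type*} [AddCommMonoid M] {n : ℕ} (F : List V → M) :
    ∑ y : Fin (n + 1) → V, F (List.ofFn y) = ∑ a, ∑ y : Fin n → V, F (a :: List.ofFn y) := by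
  rw [← (Fin.consEquiv fun _ : Fin (n + 1) => V).sum_comp, Fintype.sum_prod_type]
  simp only [Fin.consEquiv_apply, List.ofFn_succ, Fin.cons_zero, Fin.cons_succ]

variable {q : ℕ → V → ℝ} {d n : ℕ}

theorem sum_mass_ofFn (hq : ∀ i < n, ∑ v, q (i + d) v = 1) :
    ∑ y : Fin n → V, mass q d (List.ofFn y) = 1 := by
  simp_rw [mass_ofFn]
  rw [← Fintype.prod_sum]
  exact Finset.prod_eq_one fun i _ => hq i i.isLt

theorem sum_filter_prefix_mass_ofFn [DecidableEq V] {u : List V} (hu : u.length ≤ n)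
    (hq : ∀ i < n, ∑ v, q (i + d) v = 1) :
    ∑ y : Fin n → V with u <+: List.ofFn y, mass q d (List.ofFn y) = mass q d u := by
  induction u generalizing d n with
  | nil => simpa [mass] using sum_mass_ofFn hq
  | cons b u ih =>
    obtain ⟨n, rfl⟩ : ∃ m, n = m + 1 := Nat.exists_eq_add_one.mpr (by grind)
    have hq_tail : ∀ i < n, ∑ v, q (i + (d + 1)) v = 1 := fun i hi => by
      simpa only [add_assoc, add_comm 1 d] using hq (i + 1) (by lia)
    rw [Finset.sum_filter, sum_ofFn_succ fun l => if b :: u <+: l then mass q d l else 0,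
      Finset.sum_eq_single b]
    · simp only [List.cons_prefix_cons, true_and, mass]
      rw [← ih (by simpa using hu) hq_tail, Finset.mul_sum, Finset.sum_filter]
    · intro a _ hab
      simp [List.cons_prefix_cons, hab.symm]
    · simp

end PrefixProbability

section AcceptanceLength

variable {V : Type*} {L : ℕ} {T : Finset (List V)}

theorem ValidTree.mem_of_prefix_of_ne_nil (hT : ValidTree L T) {u w : List V} (hu : u ∈ T)
    (hwu : w <+: u) (hw : w ≠ []) : w ∈ T := by
  induction u using List.reverseRecOn with
  | nil => exact absurd (List.prefix_nil.mp hwu) hw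
  | append_singleton u a ih =>
    rcases List.prefix_concat_iff.mp hwu with rfl | hwu
    · exact hu
    · have hlen : 2 ≤ (u ++ [a]).length := by
        have := hwu.length_le
        have := List.length_pos_iff.mpr hw
        simp only [List.length_append, List.length_singleton]
        lia
      exact ih (by simpa using hT.2 _ hu hlen) hwu

theorem card_eq_sup_id_of_downward_closed {s : Finset ℕ} (hpos : ∀ n ∈ s, 1 ≤ n)
    (hs : ∀ n ∈ s, ∀ m, 1 ≤ m → m ≤ n → m ∈ s) : s.card = s.sup id := by
  have hIcc : s = Finset.Icc 1 (s.sup id) := by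
    ext m
    rw [Finset.mem_Icc]
    refine ⟨fun hm => ⟨hpos m hm, Finset.le_sup (f := id) hm⟩, fun ⟨hm1, hm⟩ => ?_⟩
    obtain ⟨n, hn, hmn⟩ := (Finset.le_sup_iff hm1).mp hm
    exact hs n hn m hm1 hmn
  rw [hIcc, Nat.card_Icc, ← hIcc, Nat.add_sub_cancel]

variable [DecidableEq V]

theorem ValidTree.accLen_eq_card (hT : ValidTree L T) (y : Fin L → V) :
    accLen T y = (T.filter (· <+: List.ofFn y)).card := by
  rw [accLen, ← card_eq_sup_id_of_downward_closed]
  · refine Finset.card_nbij' (List.ofFn y).take List.length ?_ ?_ ?_ ?_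
    · intro d hd
      exact Finset.mem_filter.mpr ⟨(Finset.mem_filter.mp hd).2, List.take_prefix _ _⟩
    · intro u hu
      obtain ⟨huT, huy⟩ := Finset.mem_filter.mp hu
      have htake := List.prefix_iff_eq_take.mp huy
      exact Finset.mem_filter.mpr ⟨Finset.mem_Icc.mpr (hT.1 u huT), htake ▸ huT⟩
    · intro d hd
      have := (Finset.mem_Icc.mp (Finset.mem_filter.mp hd).1).2
      simpa using this
    · intro u hu
      exact (List.prefix_iff_eq_take.mp (Finset.mem_filter.mp hu).2).symm
  · exact fun d hd => (Finset.mem_Icc.mp (Finset.mem_filter.mp hd).1).1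
  · intro d hd e he hed
    obtain ⟨hdL, hdT⟩ := Finset.mem_filter.mp hd
    rw [Finset.mem_Icc] at hdL
    refine Finset.mem_filter.mpr ⟨Finset.mem_Icc.mpr ⟨he, by lia⟩,
      hT.mem_of_prefix_of_ne_nil hdT (List.take_prefix_take_left hed) ?_⟩
    exact List.ne_nil_of_length_pos (by simp; lia)

theorem ValidTree.sum_mass_mul_accLen [Fintype V] {q : ℕ → V → ℝ} (hT : ValidTree L T)
    (hq : ∀ i ∈ Finset.Icc 1 L, ∑ v, q i v = 1) :
    ∑ y : Fin L → V, mass q 1 (List.ofFn y) * (accLen T y : ℝ) = ∑ u ∈ T, mass q 1 u := by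
  have hq_shift : ∀ i < L, ∑ v, q (i + 1) v = 1 := fun i hi =>
    hq _ (Finset.mem_Icc.mpr ⟨by lia, hi⟩)
  calc ∑ y : Fin L → V, mass q 1 (List.ofFn y) * (accLen T y : ℝ)
      = ∑ y : Fin L → V, ∑ u ∈ T, if u <+: List.ofFn y then mass q 1 (List.ofFn y) else 0 := by
        simp_rw [hT.accLen_eq_card, ← Finset.sum_filter, Finset.sum_const, nsmul_eq_mul, mul_comm]
    _ = ∑ u ∈ T, ∑ y : Fin L → V with u <+: List.ofFn y, mass q 1 (List.ofFn y) := by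
        rw [Finset.sum_comm]
        simp_rw [Finset.sum_filter]
    _ = ∑ u ∈ T, mass q 1 u :=
        Finset.sum_congr rfl fun u hu => sum_filter_prefix_mass_ofFn (hT.1 u hu).2 hq_shift

end AcceptanceLength

section TopSubset

variable {α M : Type*}

/-- `T` consists of top elements of `s` for the weight `f`: it is contained in `s`, and no element
of `s` left out of `T` outweighs an element of `T`. Ties may be broken arbitrarily. -/
structure IsTopSubset [LE M] (f : α → M) (s : Set α) (T : Finset α) : Prop where
  subset : ↑T ⊆ s
  le_of_notMem : ∀ u ∈ T, ∀ w ∈ s, w ∉ T → f w ≤ f u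

theorem IsTopSubset.le_of_forall_mem [Preorder M] {f : α → M} {s : Set α} {S T : Finset α}
    {c : M} (hT : IsTopSubset f s T) (hS : ↑S ⊆ s) (hcard : T.card ≤ S.card)
    (hc : ∀ x ∈ S, c ≤ f x) : ∀ u ∈ T, c ≤ f u := by
  intro u hu
  by_cases hST : S ⊆ T
  · exact hc u (Finset.eq_of_subset_of_card_le hST hcard ▸ hu)
  · obtain ⟨x, hxS, hxT⟩ := Finset.not_subset.mp hST
    exact (hc x hxS).trans (hT.le_of_notMem u hu x (hS hxS) hxT)

theorem IsTopSubset.sum_le_sum [AddCommMonoid M] [LinearOrder M] [IsOrderedCancelAddMonoid M]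
    {f : α → M} {s : Set α} {T T' : Finset α} (hT : IsTopSubset f s T)
    (hf : ∀ u ∈ T, 0 ≤ f u) (hT' : ↑T' ⊆ s) (hcard : T'.card ≤ T.card) :
    ∑ u ∈ T', f u ≤ ∑ u ∈ T, f u := by
  classical
  rcases T.eq_empty_or_nonempty with rfl | hne
  · simp [Finset.card_eq_zero.mp (Nat.le_zero.mp hcard)]
  obtain ⟨m, hm, hmin⟩ := T.exists_min_image f hne
  rw [← Finset.sum_sdiff_le_sum_sdiff]
  calc ∑ u ∈ T' \ T, f u
      ≤ (T' \ T).card • f m := Finset.sum_le_card_nsmul _ _ _ fun w hw =>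
        have ⟨hwT', hwT⟩ := Finset.mem_sdiff.mp hw
        hT.le_of_notMem m hm w (hT' hwT') hwT
    _ ≤ (T \ T').card • f m :=
        nsmul_le_nsmul_left (hf m hm) (Finset.card_sdiff_le_card_sdiff_iff.mpr hcard)
    _ ≤ ∑ u ∈ T \ T', f u := Finset.card_nsmul_le_sum _ _ _ fun u hu =>
        hmin u (Finset.mem_sdiff.mp hu).1

end TopSubset

section Ranks

variable {V : Type*} {q : ℕ → V → ℝ} {vEnum : ℕ → ℕ → V} {L K M n : ℕ}

theorem inSK.dropLast {u : List V} (hu : inSK vEnum L K u) (hlen : 2 ≤ u.length) :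
    inSK vEnum L K u.dropLast := by
  obtain ⟨-, hL, hrank⟩ := hu
  refine ⟨by grind, by grind, fun j => ?_⟩
  have hj : (j : ℕ) < u.length := by grind
  simpa using hrank ⟨j, hj⟩

theorem inSK_of_surjOn {u : List V}
    (hsurj : ∀ i ∈ Finset.Icc 1 L, Set.SurjOn (vEnum i) (Set.Icc 1 M) Set.univ)
    (hu : 1 ≤ u.length) (huL : u.length ≤ L) : inSK vEnum L M u := by
  refine ⟨hu, huL, fun j => ?_⟩
  obtain ⟨k, ⟨hk, hkM⟩, hkj⟩ :=
    hsurj (j + 1) (Finset.mem_Icc.mpr ⟨by lia, by lia⟩) (Set.mem_univ (u.get j))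
  exact ⟨k, hk, hkM, hkj⟩

/-- The prefix whose token at the 1-based depth `i + 1` has rank `r i`. -/
def prefixOfRanks (vEnum : ℕ → ℕ → V) (r : Fin n → ℕ) : List V :=
  List.ofFn fun i => vEnum (i + 1) (r i)

theorem inSK.exists_prefixOfRanks_eq {u : List V} (hu : inSK vEnum L K u) :
    ∃ r ∈ Set.Icc (1 : Fin u.length → ℕ) (fun _ => K), prefixOfRanks vEnum r = u := by
  choose r hr1 hrK hru using hu.2.2
  exact ⟨r, ⟨hr1, hrK⟩, by simp only [prefixOfRanks, hru, List.ofFn_get]⟩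

theorem inSK_prefixOfRanks (hn : 1 ≤ n) (hnL : n ≤ L) {r : Fin n → ℕ}
    (hr : r ∈ Set.Icc 1 (fun _ => K)) : inSK vEnum L K (prefixOfRanks vEnum r) := by
  refine ⟨by simpa [prefixOfRanks] using hn, by simpa [prefixOfRanks] using hnL, fun j => ?_⟩
  let i : Fin n := j.cast List.length_ofFn
  exact ⟨r i, hr.1 i, hr.2 i, (List.get_ofFn _ j).symm⟩

theorem prefixOfRanks_injOn (hinj : ∀ i < n, Set.InjOn (vEnum (i + 1)) (Set.Icc 1 M)) :
    Set.InjOn (prefixOfRanks vEnum) (Set.Icc (1 : Fin n → ℕ) fun _ => M) := by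
  intro r hr s hs hrs
  funext i
  exact hinj i i.isLt ⟨hr.1 i, hr.2 i⟩ ⟨hs.1 i, hs.2 i⟩ (congrFun (List.ofFn_injective hrs) i)

theorem antitoneOn_mass_prefixOfRanks (hq : ∀ i < n, ∀ v, 0 ≤ q (i + 1) v)
    (hanti : ∀ i < n, AntitoneOn (fun k => q (i + 1) (vEnum (i + 1) k)) (Set.Icc 1 M)) :
    AntitoneOn (fun r => mass q 1 (prefixOfRanks vEnum r))
      (Set.Icc (1 : Fin n → ℕ) fun _ => M) := by
  intro r hr s hs hrs
  simp only [prefixOfRanks, mass_ofFn]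
  exact Finset.prod_le_prod (fun i _ => hq i i.isLt _) fun i _ =>
    hanti i i.isLt ⟨hr.1 i, hr.2 i⟩ ⟨hs.1 i, hs.2 i⟩ (hrs i)

theorem exists_finset_inSK_mass_prefixOfRanks_le (hn : 1 ≤ n) (hnL : n ≤ L)
    (hq : ∀ i < n, ∀ v, 0 ≤ q (i + 1) v)
    (hinj : ∀ i < n, Set.InjOn (vEnum (i + 1)) (Set.Icc 1 M))
    (hanti : ∀ i < n, AntitoneOn (fun k => q (i + 1) (vEnum (i + 1) k)) (Set.Icc 1 M))
    {r : Fin n → ℕ} (hr : r ∈ Set.Icc 1 (fun _ => M)) {j : Fin n} (hj : K < r j) :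
    ∃ S : Finset (List V), S.card = K ∧
      ∀ x ∈ S, inSK vEnum L K x ∧ mass q 1 (prefixOfRanks vEnum r) ≤ mass q 1 x := by
  classical
  let s (k : ℕ) : Fin n → ℕ := Function.update (r ⊓ fun _ => K) j k
  have hs : ∀ k ∈ Finset.Icc 1 K, s k ∈ Set.Icc 1 (fun _ => K) ∧ s k ≤ r := by
    intro k hk
    obtain ⟨hk1, hkK⟩ := Finset.mem_Icc.mp hk
    have hinf : 1 ≤ r ⊓ fun _ => K := le_inf hr.1 fun _ => hk1.trans hkK
    exact ⟨⟨le_update_iff.mpr ⟨hk1, fun i _ => hinf i⟩,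
      update_le_iff.mpr ⟨hkK, fun i _ => inf_le_right (a := r i)⟩⟩,
      update_le_iff.mpr ⟨hkK.trans hj.le, fun i _ => inf_le_left (b := K)⟩⟩
  have hsM : ∀ k ∈ Finset.Icc 1 K, s k ∈ Set.Icc 1 (fun _ => M) := fun k hk =>
    ⟨(hs k hk).1.1, (hs k hk).2.trans hr.2⟩
  refine ⟨(Finset.Icc 1 K).image (prefixOfRanks vEnum ∘ s), ?_, ?_⟩
  · rw [Finset.card_image_of_injOn, Nat.card_Icc, Nat.add_sub_cancel]
    have hs_inj : s.Injective := Function.update_injective (r ⊓ fun _ => K) j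
    exact (prefixOfRanks_injOn hinj).comp hs_inj.injOn hsM
  · refine Finset.forall_mem_image.mpr fun k hk => ⟨inSK_prefixOfRanks hn hnL (hs k hk).1, ?_⟩
    exact antitoneOn_mass_prefixOfRanks hq hanti (hsM k hk) hr (hs k hk).2

end Ranks

section Optimality

variable {V : Type*} {q : ℕ → V → ℝ} {vEnum : ℕ → ℕ → V} {L K M : ℕ} {T : Finset (List V)}

theorem IsTopSubset.validTree (hT : IsTopSubset (mass q 1) {u | inSK vEnum L K u} T)
    (hq : ∀ i ∈ Finset.Icc 1 L, ∀ v, 0 < q i v ∧ q i v < 1) : ValidTree L T := by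
  refine ⟨fun u hu => ⟨(hT.subset hu).1, (hT.subset hu).2.1⟩, fun u hu hlen => ?_⟩
  have hdrop := (hT.subset hu).dropLast hlen
  have huL := (hT.subset hu).2.1
  obtain rfl | ⟨w, a, rfl⟩ := u.eq_nil_or_concat'
  · simp at hlen
  rw [List.dropLast_concat] at hdrop ⊢
  rw [List.length_append, List.length_singleton] at huL
  have hdepth : ∀ i ≤ w.length, i + 1 ∈ Finset.Icc 1 L := fun i hi =>
    Finset.mem_Icc.mpr ⟨by lia, by lia⟩
  have hlt : mass q 1 (w ++ [a]) < mass q 1 w :=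
    mass_concat_lt (mass_pos fun i hi => (hq _ (hdepth i hi.le) _).1) (hq _ (hdepth _ le_rfl) a).2
  by_contra hw
  exact (hT.le_of_notMem _ hu w hdrop hw).not_gt hlt

theorem IsTopSubset.of_inSK (hT : IsTopSubset (mass q 1) {u | inSK vEnum L (min T.card M) u} T)
    (hq : ∀ i ∈ Finset.Icc 1 L, ∀ v, 0 ≤ q i v)
    (hbij : ∀ i ∈ Finset.Icc 1 L, Set.BijOn (vEnum i) (Set.Icc 1 M) Set.univ)
    (hanti : ∀ i ∈ Finset.Icc 1 L, AntitoneOn (fun k => q i (vEnum i k)) (Set.Icc 1 M)) :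
    IsTopSubset (mass q 1) {u | 1 ≤ u.length ∧ u.length ≤ L} T := by
  refine ⟨fun u hu => ⟨(hT.subset hu).1, (hT.subset hu).2.1⟩, fun u hu w ⟨hw, hwL⟩ hwT => ?_⟩
  by_cases hwK : inSK vEnum L (min T.card M) w
  · exact hT.le_of_notMem u hu w hwK hwT
  have hdepth : ∀ i < w.length, i + 1 ∈ Finset.Icc 1 L := fun i hi =>
    Finset.mem_Icc.mpr ⟨by lia, by lia⟩
  obtain ⟨r, hr, hrw⟩ :=
    (inSK_of_surjOn (fun i hi => (hbij i hi).surjOn) hw hwL).exists_prefixOfRanks_eq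
  obtain ⟨j, hj⟩ : ∃ j, min T.card M < r j := by
    by_contra! hle
    exact hwK (hrw ▸ inSK_prefixOfRanks hw hwL ⟨hr.1, hle⟩)
  have hjM : r j ≤ M := hr.2 j
  rw [min_eq_left (by lia)] at hT hj
  obtain ⟨S, hScard, hS⟩ := exists_finset_inSK_mass_prefixOfRanks_le hw hwL
    (fun i hi => hq _ (hdepth i hi)) (fun i hi => (hbij _ (hdepth i hi)).injOn)
    (fun i hi => hanti _ (hdepth i hi)) hr hj
  rw [hrw] at hS
  exact hT.le_of_forall_mem (fun x hx => (hS x hx).1) hScard.ge (fun x hx => (hS x hx).2) u hu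

end Optimality

/-- Proposition: the best-first tree is optimal.
Assuming `0 < qᵢ(v) < 1` everywhere, let `1 ≤ B < N` and `K = min(B, |𝒱|)`. If `T` is a
set of exactly `B` prefixes contained in `S_K` whose masses dominate those of all
prefixes of `S_K` outside `T`, then `T` is a valid draft tree and it maximizes the
surrogate expected acceptance length among all valid draft trees with at most `B`
nodes. Here `vEnum i k` is the rank-`k` token at depth `i` in a fixed
nonincreasing-probability enumeration of `𝒱`. -/
theorem top_B_of_SK_tree_valid_and_optimal {V : Type*} [Fintype V] [DecidableEq V] [Nonempty V]
    (L : ℕ) (hL : 1 ≤ L) (q : ℕ → V → ℝ)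
    (hq0 : ∀ i ∈ Finset.Icc 1 L, ∀ v : V, 0 < q i v ∧ q i v < 1)
    (hq1 : ∀ i ∈ Finset.Icc 1 L, ∑ v : V, q i v = 1)
    (vEnum : ℕ → ℕ → V)
    (hbij : ∀ i ∈ Finset.Icc 1 L, Set.BijOn (vEnum i) (Set.Icc 1 (Fintype.card V)) Set.univ)
    (hmono : ∀ i ∈ Finset.Icc 1 L, ∀ k k' : ℕ, 1 ≤ k → k ≤ k' → k' ≤ Fintype.card V →
      q i (vEnum i k') ≤ q i (vEnum i k))
    (B : ℕ) (hB : 1 ≤ B) (hBN : B < ∑ d ∈ Finset.Icc 1 L, Fintype.card V ^ d)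
    (T : Finset (List V)) (hcard : T.card = B)
    (hTS : ∀ u ∈ T, inSK vEnum L (min B (Fintype.card V)) u)
    (hTop : ∀ u ∈ T, ∀ w : List V, inSK vEnum L (min B (Fintype.card V)) w → w ∉ T →
      mass q 1 w ≤ mass q 1 u) :
    ValidTree L T ∧
    ∀ T' : Finset (List V), ValidTree L T' → T'.card ≤ B →
      ∑ y : Fin L → V, mass q 1 (List.ofFn y) * (accLen T' y : ℝ)
        ≤ ∑ y : Fin L → V, mass q 1 (List.ofFn y) * (accLen T y : ℝ) := by
  subst hcard
  have htop : IsTopSubset (mass q 1) {u | inSK vEnum L (min T.card (Fintype.card V)) u} T :=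
    ⟨hTS, hTop⟩
  have hanti : ∀ i ∈ Finset.Icc 1 L,
      AntitoneOn (fun k => q i (vEnum i k)) (Set.Icc 1 (Fintype.card V)) :=
    fun i hi k hk k' hk' hkk' => hmono i hi k k' hk.1 hkk' hk'.2
  have hq_nonneg : ∀ i ∈ Finset.Icc 1 L, ∀ v, 0 ≤ q i v := fun i hi v => (hq0 i hi v).1.le
  have hvalid : ValidTree L T := htop.validTree hq0
  refine ⟨hvalid, fun T' hT' hcard' => ?_⟩
  rw [hT'.sum_mass_mul_accLen hq1, hvalid.sum_mass_mul_accLen hq1]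
  have hmass_nonneg : ∀ u ∈ T, 0 ≤ mass q 1 u := fun u hu => le_of_lt <| mass_pos fun i hi =>
    (hq0 (i + 1) (Finset.mem_Icc.mpr ⟨by lia, hi.trans_le (hvalid.1 u hu).2⟩) _).1
  exact (htop.of_inSK hq_nonneg hbij hanti).sum_le_sum hmass_nonneg hT'.1 hcard'
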